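/- Let (R,𝔪) be a two-dimensional complete regular local ring and let a finite group G act on R by ring automorphisms, with |G| a unit in R. Then: (1) R^G is a normal Cohen–Macaulay local domain of dimension two; (2) R is a maximal Cohen–Macaulay R^G-module; (3) every indecomposable maximal Cohen–Macaulay R^G-module is a direct summand of R as an R^G-module; consequently (4) R^G has only finitely many indecomposable maximal Cohen–Macaulay modules up to isomorphism, i.e., R^G is of finite Cohen–Macaulay type. -/

import Mathlib

/-- The subring of invariants `R^G` of a ring `R` under an action of a group `G`
by ring automorphisms. -/
def fixedSubring (G R : Type*) [Group G] [CommRing R] [MulSemiringAction G R] :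
    Subring R where
  carrier := {x | ∀ σ : G, σ • x = x}
  mul_mem' := by intro a b ha hb σ; rw [smul_mul', ha σ, hb σ]
  one_mem' := by intro σ; exact smul_one σ
  add_mem' := by intro a b ha hb σ; rw [smul_add, ha σ, hb σ]
  zero_mem' := by intro σ; exact smul_zero σ
  neg_mem' := by intro a ha σ; rw [smul_neg, ha σ]


/-- A finitely generated module `M` over a (two-dimensional) local ring `A` is maximal
Cohen–Macaulay iff it admits a regular sequence of length two consisting of nonunits
(i.e. of elements of the maximal ideal); note that `RingTheory.Sequence.IsRegular`
includes `M/(x,y)M ≠ 0`, so in particular `M ≠ 0`. -/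
def IsMCM₂ (A : Type*) [CommRing A] (M : Type*) [AddCommGroup M] [Module A M] : Prop :=
  Module.Finite A M ∧
    ∃ x y : A, ¬ IsUnit x ∧ ¬ IsUnit y ∧ RingTheory.Sequence.IsRegular M [x, y]

/-- A module is indecomposable iff it is nontrivial and admits no nontrivial
direct sum decomposition. -/
def IsIndecomposableModule (A : Type*) [CommRing A] (M : Type*) [AddCommGroup M]
    [Module A M] : Prop :=
  Nontrivial M ∧ ∀ N₁ N₂ : Submodule A M, IsCompl N₁ N₂ → N₁ = ⊥ ∨ N₂ = ⊥

/-!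
Let `A` be the invariant ring. The Reynolds operator is an `A`-linear retraction of `R` onto `A`, so
`A` is a direct summand of `R`, and it inherits Noetherianity, normality and completeness from `R`;
moreover `R` is finite over `A`. If `M` is maximal Cohen–Macaulay over `A`, then `Hom_A(R, M)` is
maximal Cohen–Macaulay over `R`, because `Hom` into a module of depth two has depth at least two;
hence it is free over the regular ring `R`. As an `A`-module it contains `Hom_A(A, M) = M` as a
direct summand, so `M` is a direct summand of a power of `R`. Over the complete local ring `A`
idempotents lift, so an indecomposable `M` has a local endomorphism ring, and the Krull–Schmidt
exchange argument makes `M` isomorphic to one of the finitely many indecomposable summands of `R`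
itself.
-/

open IsLocalRing RingTheory.Sequence
open scoped Pointwise nonZeroDivisors

universe u v w

/-! ### Regular systems of parameters -/

/-- A regular system of parameters of a local ring: a list of generators of the maximal ideal
whose length is the Krull dimension. It exists exactly when the (Noetherian) ring is regular. -/
structure IsRegularParameters {R : Type*} [CommRing R] [IsLocalRing R] (rs : List R) : Prop where
  ofList_eq : Ideal.ofList rs = maximalIdeal R
  ringKrullDim_eq : ringKrullDim R = rs.length

theorem isLocalRing_quotient_span_singleton {R : Type*} [CommRing R] [IsLocalRing R] {r : R}
    (hr : r ∈ maximalIdeal R) : IsLocalRing (R ⧸ Ideal.span {r}) :=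
  have : Nontrivial (R ⧸ Ideal.span {r}) := by
    rw [Ideal.Quotient.nontrivial_iff, Ne, Ideal.span_singleton_eq_top]
    exact hr
  .of_surjective' _ Ideal.Quotient.mk_surjective

theorem ofList_map_mk_eq_maximalIdeal {R : Type*} [CommRing R] [IsLocalRing R] {r : R}
    {rs : List R} [IsLocalRing (R ⧸ Ideal.span {r})]
    (h : Ideal.ofList (r :: rs) = maximalIdeal R) :
    Ideal.ofList (rs.map (Ideal.Quotient.mk (Ideal.span {r}))) =
      maximalIdeal (R ⧸ Ideal.span {r}) := by
  rw [← Ideal.map_ofList, ← map_maximalIdeal_of_surjective _ Ideal.Quotient.mk_surjective,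
    ← h, Ideal.ofList_cons, Ideal.map_sup, Ideal.map_quotient_self, bot_sup_eq]

theorem exists_isPrime_ringKrullDim_le_quotient (R : Type*) [CommRing R]
    [FiniteRingKrullDim R] :
    ∃ p : Ideal R, p.IsPrime ∧ ringKrullDim R ≤ ringKrullDim (R ⧸ p) := by
  let l := LTSeries.longestOf (PrimeSpectrum R)
  refine ⟨l.head.asIdeal, l.head.isPrime, ?_⟩
  have hzero : PrimeSpectrum.zeroLocus (l.head.asIdeal : Set R) = Set.Ici l.head := by
    ext q
    simp [PrimeSpectrum.mem_zeroLocus, ← PrimeSpectrum.asIdeal_le_asIdeal]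
  rw [ringKrullDim_quotient, hzero, ringKrullDim,
    Order.krullDim_eq_length_of_finiteDimensionalOrder, ← Order.coheight_eq_krullDim_Ici]
  exact_mod_cast Order.length_le_coheight le_rfl

theorem ringKrullDim_le_length_of_ofList_eq {R : Type*} [CommRing R] [IsLocalRing R]
    [IsNoetherianRing R] {rs : List R} (h : Ideal.ofList rs = maximalIdeal R) :
    ringKrullDim R ≤ rs.length := by
  classical
  have hspan : (maximalIdeal R).spanFinrank ≤ rs.length := by
    rw [← h, Ideal.ofList, ← List.coe_toFinset]
    refine (Submodule.spanFinrank_span_le_ncard_of_finite rs.toFinset.finite_toSet).trans ?_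
    rw [Set.ncard_coe_finset]
    exact rs.toFinset_card_le
  exact (ringKrullDim_le_spanFinrank_maximalIdeal R).trans (by exact_mod_cast hspan)

theorem ringKrullDim_le_quotient_span_singleton_add_one {R : Type*} [CommRing R] [IsLocalRing R]
    [IsNoetherianRing R] {r : R} (hr : r ∈ maximalIdeal R) :
    ringKrullDim R ≤ ringKrullDim (R ⧸ Ideal.span {r}) + 1 := by
  have hr' : ({r} : Set R) ⊆ Ring.jacobson R := by
    rwa [ringJacobson_eq_maximalIdeal, Set.singleton_subset_iff]
  simpa using ringKrullDim_le_ringKrullDim_quotient_add_encard {r} hr'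

theorem natCast_le_of_natCast_succ_le_add_one {n : ℕ} {d : WithBot ℕ∞}
    (h : ((n + 1 : ℕ) : WithBot ℕ∞) ≤ d + 1) : (n : WithBot ℕ∞) ≤ d := by
  induction d with
  | bot => exact absurd h (by simp)
  | coe d =>
    have h' : (n : ℕ∞) + 1 ≤ d + 1 := by exact_mod_cast h
    exact_mod_cast (WithTop.add_le_add_iff_right WithTop.one_ne_top).mp h'

namespace IsRegularParameters

section Quotient

variable {R : Type u} [CommRing R] [IsLocalRing R] {r : R} {rs : List R}

theorem mem_maximalIdeal (h : IsRegularParameters rs) (hr : r ∈ rs) : r ∈ maximalIdeal R :=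
  h.ofList_eq ▸ Ideal.subset_span hr

theorem isLocalRing_quotient (h : IsRegularParameters (r :: rs)) :
    IsLocalRing (R ⧸ Ideal.span {r}) :=
  isLocalRing_quotient_span_singleton (h.mem_maximalIdeal List.mem_cons_self)

variable [IsNoetherianRing R]

theorem quotient [IsLocalRing (R ⧸ Ideal.span {r})] (h : IsRegularParameters (r :: rs)) :
    IsRegularParameters (rs.map (Ideal.Quotient.mk (Ideal.span {r}))) := by
  have hmax := ofList_map_mk_eq_maximalIdeal h.ofList_eq
  refine ⟨hmax, (ringKrullDim_le_length_of_ofList_eq hmax).antisymm ?_⟩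
  rw [List.length_map]
  apply natCast_le_of_natCast_succ_le_add_one
  rw [← List.length_cons (a := r), ← h.ringKrullDim_eq]
  exact ringKrullDim_le_quotient_span_singleton_add_one (h.mem_maximalIdeal List.mem_cons_self)

end Quotient

end IsRegularParameters

theorem le_span_singleton_of_ringKrullDim_quotient_lt {R : Type*} [CommRing R] [IsLocalRing R]
    [IsNoetherianRing R] {r : R} (hr : r ∈ maximalIdeal R) [IsDomain (R ⧸ Ideal.span {r})]
    {p : Ideal R} [Nontrivial (R ⧸ p)]
    (hlt : ringKrullDim (R ⧸ Ideal.span {r}) < ringKrullDim (R ⧸ p)) :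
    p ≤ Ideal.span {r} := fun z hz ↦ by
  by_contra hzr
  have := IsLocalRing.of_surjective' (Ideal.Quotient.mk p) Ideal.Quotient.mk_surjective
  let f : R ⧸ Ideal.span {r} →+* (R ⧸ p) ⧸ Ideal.span {Ideal.Quotient.mk p r} :=
    Ideal.Quotient.lift _ ((Ideal.Quotient.mk _).comp (Ideal.Quotient.mk p)) fun s hs ↦ by
      obtain ⟨c, rfl⟩ := Ideal.mem_span_singleton'.mp hs
      simp
  have hf : Function.Surjective f := Ideal.Quotient.lift_surjective_of_surjective _ _ <|
    Ideal.Quotient.mk_surjective.comp Ideal.Quotient.mk_surjective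
  have hfz : f (Ideal.Quotient.mk _ z) = 0 := by
    simp [f, Ideal.Quotient.eq_zero_iff_mem.mpr hz]
  have hz0 : Ideal.Quotient.mk (Ideal.span {r}) z ∈ (R ⧸ Ideal.span {r})⁰ :=
    mem_nonZeroDivisors_of_ne_zero fun h0 ↦ hzr (Ideal.Quotient.eq_zero_iff_mem.mp h0)
  have hrp : Ideal.Quotient.mk p r ∈ maximalIdeal (R ⧸ p) := by
    rw [← map_maximalIdeal_of_surjective _ Ideal.Quotient.mk_surjective]
    exact Ideal.mem_map_of_mem _ hr
  exact hlt.not_ge <| (ringKrullDim_le_quotient_span_singleton_add_one hrp).trans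
    (ringKrullDim_succ_le_of_surjective f hf hz0 hfz)

theorem eq_bot_of_isPrime_of_le_span_singleton {R : Type*} [CommRing R] [IsLocalRing R]
    [IsNoetherianRing R] {r : R} (hr : r ∈ maximalIdeal R) {p : Ideal R} [hp : p.IsPrime]
    (hrp : r ∉ p) (hpr : p ≤ Ideal.span {r}) : p = ⊥ := by
  refine Submodule.eq_bot_of_le_smul_of_le_jacobson_bot (Ideal.span {r}) p
    (IsNoetherian.noetherian p) (fun z hz ↦ ?_) ?_
  · obtain ⟨c, rfl⟩ := Ideal.mem_span_singleton'.mp (hpr hz)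
    rw [mul_comm, smul_eq_mul]
    exact Ideal.mul_mem_mul (Ideal.mem_span_singleton_self r)
      ((hp.mem_or_mem hz).resolve_right hrp)
  · rwa [jacobson_eq_maximalIdeal _ bot_ne_top, Ideal.span_singleton_le_iff_mem]

theorem isDomain_of_ringKrullDim_quotient_span_singleton_lt {R : Type*} [CommRing R]
    [IsLocalRing R] [IsNoetherianRing R] {r : R} (hr : r ∈ maximalIdeal R)
    [IsDomain (R ⧸ Ideal.span {r})]
    (hlt : ringKrullDim (R ⧸ Ideal.span {r}) < ringKrullDim R) : IsDomain R := by
  obtain ⟨p, hp, hdim⟩ := exists_isPrime_ringKrullDim_le_quotient R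
  have hrp : r ∉ p := fun hrp ↦ (hlt.trans_le hdim).not_ge <|
    ringKrullDim_le_of_surjective
      (Ideal.Quotient.factor ((Ideal.span_singleton_le_iff_mem p).mpr hrp))
      (Ideal.Quotient.factor_surjective _)
  have hpr := le_span_singleton_of_ringKrullDim_quotient_lt hr (hlt.trans_le hdim)
  obtain rfl := eq_bot_of_isPrime_of_le_span_singleton hr hrp hpr
  exact IsDomain.of_bot_isPrime R

theorem IsRegularParameters.isDomain {R : Type u} [CommRing R] [IsLocalRing R]
    [IsNoetherianRing R] {rs : List R} (h : IsRegularParameters rs) : IsDomain R := by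
  generalize hn : rs.length = n
  induction n generalizing R rs with
  | zero =>
    obtain rfl := List.length_eq_zero_iff.mp hn
    have hbot : maximalIdeal R = ⊥ := by rw [← h.ofList_eq, Ideal.ofList_nil]
    exact (isField_iff_maximalIdeal_eq.mpr hbot).isDomain
  | succ n ih =>
    obtain ⟨r, rs, rfl⟩ := List.exists_cons_of_length_eq_add_one hn
    have := h.isLocalRing_quotient
    have hlen : (rs.map (Ideal.Quotient.mk (Ideal.span {r}))).length = n := by simpa using hn
    have := ih h.quotient hlen
    refine isDomain_of_ringKrullDim_quotient_span_singleton_lt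
      (h.mem_maximalIdeal List.mem_cons_self) ?_
    rw [h.quotient.ringKrullDim_eq, h.ringKrullDim_eq, hlen, hn]
    exact_mod_cast n.lt_succ_self

namespace IsRegularParameters

variable {R : Type u} [CommRing R] [IsLocalRing R] [IsNoetherianRing R] {r : R} {rs : List R}

theorem ne_zero (h : IsRegularParameters (r :: rs)) : r ≠ 0 := by
  rintro rfl
  have := h.isLocalRing_quotient
  have hle : ringKrullDim R ≤ ringKrullDim (R ⧸ Ideal.span {(0 : R)}) := by
    rw [Ideal.span_singleton_eq_bot.mpr rfl]
    exact (ringKrullDim_eq_of_ringEquiv (RingEquiv.quotientBot R)).ge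
  rw [h.quotient.ringKrullDim_eq, h.ringKrullDim_eq, List.length_map, Nat.cast_le] at hle
  simp at hle

theorem isDomain_quotient (h : IsRegularParameters (r :: rs)) :
    IsDomain (R ⧸ Ideal.span {r}) :=
  have := h.isLocalRing_quotient
  h.quotient.isDomain

theorem prime (h : IsRegularParameters (r :: rs)) : Prime r := by
  rw [← Ideal.span_singleton_prime h.ne_zero, ← Ideal.Quotient.isDomain_iff_prime]
  exact h.isDomain_quotient

theorem isWeaklyRegular (h : IsRegularParameters rs) : IsWeaklyRegular R rs := by
  generalize hn : rs.length = n
  induction n generalizing R rs with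
  | zero =>
    obtain rfl := List.length_eq_zero_iff.mp hn
    exact .nil R R
  | succ n ih =>
    obtain ⟨r, rs, rfl⟩ := List.exists_cons_of_length_eq_add_one hn
    have := h.isDomain
    have := h.isLocalRing_quotient
    have hquot := (isWeaklyRegular_map_algebraMap_iff (R ⧸ Ideal.span {r}) _ rs).mp
      (ih h.quotient (by simpa using hn))
    have hspan : Ideal.span {r} = r • (⊤ : Submodule R R) := by
      rw [← Submodule.ideal_span_singleton_smul, smul_eq_mul, Ideal.mul_top]
    exact .cons (IsSMulRegular.of_ne_zero h.ne_zero)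
      (((Submodule.quotEquivOfEq _ _ hspan).isWeaklyRegular_congr rs).mp hquot)

end IsRegularParameters

theorem free_of_isWeaklyRegular_of_ofList_eq {R : Type u} [CommRing R] [IsLocalRing R]
    [IsNoetherianRing R] {rs : List R} (h : Ideal.ofList rs = maximalIdeal R) {M : Type v}
    [AddCommGroup M] [Module R M] [Module.Finite R M] (hM : IsWeaklyRegular M rs) :
    Module.Free R M := by
  generalize hn : rs.length = n
  induction n generalizing R M rs with
  | zero =>
    obtain rfl := List.length_eq_zero_iff.mp hn
    have hbot : maximalIdeal R = ⊥ := by rw [← h, Ideal.ofList_nil]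
    let _ := (isField_iff_maximalIdeal_eq.mpr hbot).toField
    exact Module.Free.of_divisionRing R M
  | succ n ih =>
    obtain ⟨r, rs, rfl⟩ := List.exists_cons_of_length_eq_add_one hn
    have hr : r ∈ maximalIdeal R := h ▸ Ideal.subset_span List.mem_cons_self
    have hjac : r ∈ (⊥ : Ideal R).jacobson := by rwa [jacobson_eq_maximalIdeal _ bot_ne_top]
    have := isLocalRing_quotient_span_singleton hr
    rw [isWeaklyRegular_cons_iff'] at hM
    have := Module.Finite.of_restrictScalars_finite R (R ⧸ Ideal.span {r}) (QuotSMulTop r M)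
    have := Module.finitePresentation_of_finite R M
    rw [← Module.free_quotSMulTop_iff_free R M hjac hM.1]
    exact ih (ofList_map_mk_eq_maximalIdeal h) hM.2 (by simpa using hn)

/-! ### Weakly regular pairs -/

section WeaklyRegularPair

variable {R : Type*} [CommRing R] {M N : Type*} [AddCommGroup M] [Module R M] [AddCommGroup N]
  [Module R N] {x y a : R}

theorem mem_smul_top_iff_exists_smul_eq {m : M} :
    m ∈ x • (⊤ : Submodule R M) ↔ ∃ m', x • m' = m := by
  simp [Submodule.mem_smul_pointwise_iff_exists]

theorem isWeaklyRegular_pair_iff :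
    IsWeaklyRegular M [x, y] ↔
      IsSMulRegular M x ∧ ∀ m, y • m ∈ x • (⊤ : Submodule R M) → m ∈ x • (⊤ : Submodule R M) := by
  rw [isWeaklyRegular_cons_iff, isWeaklyRegular_singleton_iff,
    isSMulRegular_quotient_iff_mem_of_smul_mem]

theorem exists_smul_eq_of_isWeaklyRegular_pair (h : IsWeaklyRegular M [x, y]) {m m' : M}
    (hm : y • m = x • m') : ∃ n, x • n = m :=
  mem_smul_top_iff_exists_smul_eq.mp <|
    (isWeaklyRegular_pair_iff.mp h).2 m (mem_smul_top_iff_exists_smul_eq.mpr ⟨m', hm.symm⟩)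

/-- If `x • m = a • u` and `y • m = a • v`, then `a • (y • u - x • v) = 0`, so `y • u` and hence `u`
is a multiple of `x`, say `u = x • n`; cancelling `x` gives `m = a • n`. -/
theorem mem_smul_top_of_smul_mem_of_smul_mem (h : IsWeaklyRegular M [x, y])
    (ha : IsSMulRegular M a) {m : M} (hx : x • m ∈ a • (⊤ : Submodule R M))
    (hy : y • m ∈ a • (⊤ : Submodule R M)) : m ∈ a • (⊤ : Submodule R M) := by
  obtain ⟨u, hu⟩ := mem_smul_top_iff_exists_smul_eq.mp hx
  obtain ⟨v, hv⟩ := mem_smul_top_iff_exists_smul_eq.mp hy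
  have huv : y • u = x • v := ha <| show a • y • u = a • x • v by
    rw [smul_comm a y, hu, smul_comm a x, hv, smul_comm]
  obtain ⟨n, rfl⟩ := exists_smul_eq_of_isWeaklyRegular_pair h huv
  have hn : a • n = m := (isWeaklyRegular_pair_iff.mp h).1 <|
    show x • a • n = x • m by rw [smul_comm x a, hu]
  exact mem_smul_top_iff_exists_smul_eq.mpr ⟨n, hn⟩

theorem mem_smul_top_of_forall_mem_pow {J : Ideal R} (h : IsWeaklyRegular M [x, y])
    (hx : x ∈ J) (hy : y ∈ J) (ha : IsSMulRegular M a) (k : ℕ) {m : M}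
    (hm : ∀ z ∈ J ^ k, z • m ∈ a • (⊤ : Submodule R M)) : m ∈ a • (⊤ : Submodule R M) := by
  induction k generalizing m with
  | zero => simpa using hm 1 (by simp)
  | succ k ih =>
    have hmul : ∀ w ∈ J, w • m ∈ a • (⊤ : Submodule R M) := fun w hw ↦ ih fun z hz ↦ by
      rw [smul_smul]
      exact hm _ (Ideal.mul_mem_mul hz hw)
    exact mem_smul_top_of_smul_mem_of_smul_mem h ha (hmul x hx) (hmul y hy)

/-- The submodule `T` killed by `a` satisfies `T = x • T`, because some power of `y` is congruent to
a multiple of `a` modulo `x`; hence it vanishes by Nakayama. -/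
theorem isSMulRegular_of_mem_radical [IsNoetherian R M] (h : IsWeaklyRegular M [x, y])
    (hx : x ∈ (⊥ : Ideal R).jacobson) (hy : y ∈ (Ideal.span {a, x}).radical) :
    IsSMulRegular M a := by
  obtain ⟨n, hn⟩ := hy
  obtain ⟨c, d, hcd⟩ := Ideal.mem_span_pair.mp hn
  have hpow : ∀ (k : ℕ) (m : M), y ^ k • m ∈ x • (⊤ : Submodule R M) →
      m ∈ x • (⊤ : Submodule R M) := fun k ↦ by
    induction k with
    | zero => simp
    | succ k ih =>
      intro m hm
      rw [pow_succ, mul_smul] at hm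
      exact (isWeaklyRegular_pair_iff.mp h).2 m (ih _ hm)
  have hxreg := (isWeaklyRegular_pair_iff.mp h).1
  let T : Submodule R M := LinearMap.ker (LinearMap.lsmul R M a)
  have hT : T ≤ Ideal.span {x} • T := fun t ht ↦ by
    have ht : a • t = 0 := ht
    have hyt : y ^ n • t = x • d • t := by
      rw [← hcd, add_smul, mul_smul, ht, smul_zero, zero_add, smul_smul, mul_comm]
    obtain ⟨s, rfl⟩ := mem_smul_top_iff_exists_smul_eq.mp <|
      hpow n t (mem_smul_top_iff_exists_smul_eq.mpr ⟨_, hyt.symm⟩)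
    have hs : a • s = 0 := hxreg <| show x • a • s = x • (0 : M) by
      rw [smul_comm x a, ht, smul_zero]
    exact Submodule.smul_mem_smul (Ideal.mem_span_singleton_self x) hs
  have hbot : T = ⊥ := Submodule.eq_bot_of_le_smul_of_le_jacobson_bot _ T
    (IsNoetherian.noetherian T) hT (by rwa [Ideal.span_singleton_le_iff_mem])
  exact LinearMap.ker_eq_bot.mp hbot

theorem isWeaklyRegular_pair_ideal_of_notMem {P : Ideal R} [hP : P.IsPrime]
    (h : IsWeaklyRegular R [x, y]) (hx : x ∉ P) : IsWeaklyRegular P [x, y] := by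
  refine isWeaklyRegular_pair_iff.mpr
    ⟨(isWeaklyRegular_pair_iff.mp h).1.submodule P x, fun m hm ↦ ?_⟩
  obtain ⟨m', hm'⟩ := mem_smul_top_iff_exists_smul_eq.mp hm
  have hval : y • (m : R) = x • (m' : R) := congrArg Subtype.val hm'.symm
  obtain ⟨n, hn⟩ := exists_smul_eq_of_isWeaklyRegular_pair h hval
  have hnP : n ∈ P := (hP.mem_or_mem (by rw [← smul_eq_mul, hn]; exact m.2)).resolve_left hx
  exact mem_smul_top_iff_exists_smul_eq.mpr ⟨⟨n, hnP⟩, Subtype.ext hn⟩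

theorem isWeaklyRegular_pair_of_comp_eq_id {i : N →ₗ[R] M} {q : M →ₗ[R] N}
    (hqi : q ∘ₗ i = LinearMap.id) (h : IsWeaklyRegular M [x, y]) : IsWeaklyRegular N [x, y] := by
  have hq (n : N) : q (i n) = n := LinearMap.congr_fun hqi n
  refine isWeaklyRegular_pair_iff.mpr ⟨fun n n' hn ↦ ?_, fun n hn ↦ ?_⟩
  · have hi : i n = i n' := (isWeaklyRegular_pair_iff.mp h).1 <|
      show x • i n = x • i n' by simpa using congrArg i hn
    rw [← hq n, hi, hq]
  · obtain ⟨n', hn'⟩ := mem_smul_top_iff_exists_smul_eq.mp hn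
    obtain ⟨m, hm⟩ := exists_smul_eq_of_isWeaklyRegular_pair h
      (show y • i n = x • i n' by rw [← map_smul, ← hn', map_smul])
    exact mem_smul_top_iff_exists_smul_eq.mpr ⟨q m, by rw [← map_smul, hm, hq]⟩

theorem isWeaklyRegular_pair_linearMap (h : IsWeaklyRegular M [x, y]) :
    IsWeaklyRegular (N →ₗ[R] M) [x, y] := by
  have hx : IsSMulRegular M x := (isWeaklyRegular_pair_iff.mp h).1
  refine isWeaklyRegular_pair_iff.mpr ⟨fun φ ψ hφψ ↦ ?_, fun φ hφ ↦ ?_⟩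
  · exact LinearMap.ext fun n ↦ hx (LinearMap.congr_fun hφψ n)
  · obtain ⟨ψ, hψ⟩ := mem_smul_top_iff_exists_smul_eq.mp hφ
    have hrange (n : N) : φ n ∈ LinearMap.range (LinearMap.lsmul R M x) :=
      exists_smul_eq_of_isWeaklyRegular_pair h (LinearMap.congr_fun hψ.symm n)
    let e := LinearEquiv.ofInjective (LinearMap.lsmul R M x) hx
    refine mem_smul_top_iff_exists_smul_eq.mpr
      ⟨e.symm ∘ₗ φ.codRestrict _ hrange, LinearMap.ext fun n ↦ ?_⟩
    exact congrArg Subtype.val (e.apply_symm_apply (φ.codRestrict _ hrange n))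

end WeaklyRegularPair

section TwoDimensional

variable {R : Type u} [CommRing R] [IsLocalRing R] [IsNoetherianRing R] {a b x y : R}

namespace IsRegularParameters

theorem isMaximal_quotient_of_ne_bot (h : IsRegularParameters [a, b])
    {p : Ideal (R ⧸ Ideal.span {a})} [p.IsPrime] (hp : p ≠ ⊥) : p.IsMaximal := by
  have := h.isLocalRing_quotient
  have := h.isDomain_quotient
  have hdim : Ring.KrullDimLE 1 (R ⧸ Ideal.span {a}) :=
    Ring.krullDimLE_iff.mpr (by simp [h.quotient.ringKrullDim_eq])
  exact Ring.krullDimLE_one_iff_of_noZeroDivisors.mp hdim p hp ‹_›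

theorem maximalIdeal_le_radical_of_not_dvd (h : IsRegularParameters [a, b]) (hx : ¬ a ∣ x) :
    maximalIdeal R ≤ (Ideal.span {a, x}).radical := by
  rw [Ideal.radical_eq_sInf, le_sInf_iff]
  rintro p ⟨hp, hprime⟩
  have hap : Ideal.span {a} ≤ p := (Ideal.span_mono (by simp)).trans hp
  have hxp : x ∈ p := hp (Ideal.subset_span (by simp))
  have : (p.map (Ideal.Quotient.mk (Ideal.span {a}))).IsPrime :=
    Ideal.map_isPrime_of_surjective Ideal.Quotient.mk_surjective (by rwa [Ideal.mk_ker])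
  have hne : p.map (Ideal.Quotient.mk (Ideal.span {a})) ≠ ⊥ := fun hbot ↦ hx <| by
    rw [← Ideal.mem_span_singleton, ← Ideal.Quotient.eq_zero_iff_mem, ← Ideal.mem_bot, ← hbot]
    exact Ideal.mem_map_of_mem _ hxp
  have := h.isMaximal_quotient_of_ne_bot hne
  have hmax := Ideal.comap_isMaximal_of_surjective (Ideal.Quotient.mk (Ideal.span {a}))
    Ideal.Quotient.mk_surjective (K := p.map (Ideal.Quotient.mk (Ideal.span {a})))
  rw [Ideal.comap_map_quotientMk, sup_eq_right.mpr hap] at hmax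
  exact (eq_maximalIdeal hmax).ge

theorem free_of_isWeaklyRegular (h : IsRegularParameters [a, b]) {M : Type v}
    [AddCommGroup M] [Module R M] [Module.Finite R M] (hx : x ∈ maximalIdeal R)
    (hy : y ∈ maximalIdeal R) (hM : IsWeaklyRegular M [x, y]) : Module.Free R M := by
  have ha : IsSMulRegular M a := by
    by_cases hdvd : a ∣ x
    · obtain ⟨c, rfl⟩ := hdvd
      exact (IsSMulRegular.mul_iff.mp (isWeaklyRegular_pair_iff.mp hM).1).1
    · exact isSMulRegular_of_mem_radical hM (by rwa [jacobson_eq_maximalIdeal _ bot_ne_top])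
        (h.maximalIdeal_le_radical_of_not_dvd hdvd hy)
  refine free_of_isWeaklyRegular_of_ofList_eq h.ofList_eq
    (isWeaklyRegular_pair_iff.mpr ⟨ha, fun m hm ↦ ?_⟩)
  have hmem : ∀ z ∈ maximalIdeal R, z • m ∈ a • (⊤ : Submodule R M) := fun z hz ↦ by
    rw [← h.ofList_eq, Ideal.ofList_cons, Ideal.ofList_singleton, ← Ideal.span_insert,
      Ideal.mem_span_pair] at hz
    obtain ⟨c, d, rfl⟩ := hz
    rw [add_smul, mul_comm, mul_smul, mul_smul]
    exact add_mem (Submodule.smul_mem_pointwise_smul _ _ _ trivial) (Submodule.smul_mem _ d hm)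
  exact mem_smul_top_of_smul_mem_of_smul_mem hM ha (hmem x hx) (hmem y hy)

/-- A prime not containing `a` is again free, hence principal, and its generator is prime. -/
theorem uniqueFactorizationMonoid [IsDomain R] (h : IsRegularParameters [a, b]) :
    UniqueFactorizationMonoid R := by
  rw [UniqueFactorizationMonoid.iff_exists_prime_mem_of_isPrime]
  intro P hP hprime
  by_cases haP : a ∈ P
  · exact ⟨a, haP, h.prime⟩
  have hfree : Module.Free R P := free_of_isWeaklyRegular_of_ofList_eq h.ofList_eq
    (isWeaklyRegular_pair_ideal_of_notMem h.isWeaklyRegular haP)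
  have hprin : (P : Submodule R R).IsPrincipal := by
    rw [← Submodule.rank_le_one_iff_isPrincipal]
    exact (Submodule.rank_le P).trans (by simp)
  obtain ⟨q, rfl⟩ := hprin
  rw [Ideal.submodule_span_eq] at hP hprime
  have hq : q ≠ 0 := by rintro rfl; simp at hP
  exact ⟨q, Ideal.mem_span_singleton_self q, (Ideal.span_singleton_prime hq).mp hprime⟩

end IsRegularParameters

end TwoDimensional

/-! ### Split extensions -/

section Retraction

variable {A R : Type*} [CommRing A] [CommRing R] [Algebra A R] {ρ : R →ₗ[A] A}

theorem apply_algebraMap_of_map_one (hρ : ρ 1 = 1) (a : A) : ρ (algebraMap A R a) = a := by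
  rw [Algebra.algebraMap_eq_smul_one, map_smul, hρ, smul_eq_mul, mul_one]

theorem comp_algebra_linearMap_of_map_one (hρ : ρ 1 = 1) :
    ρ ∘ₗ Algebra.linearMap A R = LinearMap.id :=
  LinearMap.ext fun a ↦ apply_algebraMap_of_map_one hρ a

theorem algebraMap_injective_of_map_one (hρ : ρ 1 = 1) : Function.Injective (algebraMap A R) :=
  Function.LeftInverse.injective (apply_algebraMap_of_map_one hρ)

theorem comap_map_of_map_one (hρ : ρ 1 = 1) (I : Ideal A) :
    (I.map (algebraMap A R)).comap (algebraMap A R) = I := by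
  refine le_antisymm (fun a ha ↦ ?_) Ideal.le_comap_map
  have hI : Submodule.map ρ (I • ⊤) ≤ I := by
    rw [Submodule.map_smul'']
    exact Ideal.mul_le_left (I := I) (J := Submodule.map ρ ⊤)
  rw [← apply_algebraMap_of_map_one hρ a]
  refine hI (Submodule.mem_map_of_mem ?_)
  rw [Ideal.smul_top_eq_map]
  exact ha

theorem isNoetherianRing_of_map_one (hρ : ρ 1 = 1) [IsNoetherianRing R] : IsNoetherianRing A := by
  have hinj : Function.Injective (Ideal.map (algebraMap A R)) :=
    Function.LeftInverse.injective (comap_map_of_map_one hρ)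
  rw [isNoetherianRing_iff, isNoetherian_iff']
  exact (Monotone.strictMono_of_injective (fun _ _ ↦ Ideal.map_mono) hinj).wellFoundedGT

theorem isLocalHom_algebraMap_of_map_one (hρ : ρ 1 = 1) : IsLocalHom (algebraMap A R) where
  map_nonunit a ha := by
    obtain ⟨u, hu⟩ := ha.exists_right_inv
    refine IsUnit.of_mul_eq_one (ρ u) ?_
    rw [← smul_eq_mul, ← map_smul, Algebra.smul_def, hu, hρ]

theorem isIntegrallyClosed_of_map_one (hρ : ρ 1 = 1) [IsDomain A] [IsDomain R]
    [IsIntegrallyClosed R] : IsIntegrallyClosed A := by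
  have := (faithfulSMul_iff_algebraMap_injective A R).mpr (algebraMap_injective_of_map_one hρ)
  rw [isIntegrallyClosed_iff (FractionRing A)]
  intro q hq
  obtain ⟨n, d, hd, rfl⟩ := IsFractionRing.div_surjective (A := A) q
  have hd0 : algebraMap A (FractionRing A) d ≠ 0 := by simpa using nonZeroDivisors.ne_zero hd
  let _ := FractionRing.liftAlgebra A (FractionRing R)
  have hq' := (hq.map (IsScalarTower.toAlgHom A (FractionRing A) (FractionRing R))).tower_top
    (A := R)
  obtain ⟨r, hr⟩ := IsIntegrallyClosed.isIntegral_iff.mp hq'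
  have hrd : d • r = algebraMap A R n := IsFractionRing.injective R (FractionRing R) <| by
    have hmul := congrArg (algebraMap A (FractionRing R) d * ·) hr
    have hd0' : algebraMap A (FractionRing R) d ≠ 0 := by
      rw [IsScalarTower.algebraMap_apply A (FractionRing A)]
      simpa using hd0
    simpa [Algebra.smul_def, ← IsScalarTower.algebraMap_apply, mul_div_cancel₀ _ hd0'] using hmul
  refine ⟨ρ r, ?_⟩
  rw [eq_div_iff hd0, ← map_mul, mul_comm, ← smul_eq_mul, ← map_smul, hrd,
    apply_algebraMap_of_map_one hρ]

end Retraction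

section Precomplete

variable {A M N : Type*} [CommRing A] [AddCommGroup M] [Module A M] [AddCommGroup N] [Module A N]

theorem isPrecomplete_of_surjective (I : Ideal A) [IsPrecomplete I M] {f : M →ₗ[A] N}
    (hf : Function.Surjective f) : IsPrecomplete I N := by
  refine AdicCompletion.of_surjective_iff.mp fun y ↦ ?_
  obtain ⟨x, rfl⟩ := AdicCompletion.map_surjective I hf y
  obtain ⟨m, rfl⟩ := AdicCompletion.of_surjective I M x
  exact ⟨f m, (AdicCompletion.map_of I f m).symm⟩

theorem isPrecomplete_pi_fin (I : Ideal A) [IsPrecomplete I A] (n : ℕ) :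
    IsPrecomplete I (Fin n → A) := by
  refine AdicCompletion.of_surjective_iff.mp fun x ↦ ?_
  choose z hz using fun i ↦
    AdicCompletion.of_surjective I A (AdicCompletion.piEquivFin I n x i)
  exact ⟨z, (AdicCompletion.piEquivFin I n).injective (funext hz)⟩

theorem isPrecomplete_of_finite (I : Ideal A) [IsPrecomplete I A] [Module.Finite A M] :
    IsPrecomplete I M := by
  obtain ⟨n, f, hf⟩ := Module.Finite.exists_fin' A M
  have := isPrecomplete_pi_fin I n
  exact isPrecomplete_of_surjective I hf

/-- A `J`-adic Cauchy sequence is `I`-adically Cauchy; its `I`-adic limit `L` is also a `J`-adic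
limit, since `f k ≡ f (c * k + k) ≡ L` modulo `J ^ k`. -/
theorem isPrecomplete_of_pow_le {I J : Ideal A} [IsPrecomplete I M] (hJI : J ≤ I) {c : ℕ}
    (hIJ : I ^ c ≤ J) : IsPrecomplete J M where
  prec' f hf := by
    obtain ⟨L, hL⟩ := IsPrecomplete.prec (I := I) (M := M) inferInstance fun {m k} hmk ↦
      (hf hmk).mono (Submodule.smul_mono_left (Ideal.pow_right_mono hJI m))
    refine ⟨L, fun k ↦ (hf (Nat.le_add_left k (c * k))).trans ((hL _).mono ?_)⟩
    refine Submodule.smul_mono_left ((Ideal.pow_le_pow_right (Nat.le_add_right _ _)).trans ?_)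
    rw [pow_mul]
    exact Ideal.pow_right_mono hIJ k

theorem isAdicComplete_map_algebraMap {B : Type*} [CommRing B] [Algebra A B] [Module.Finite A B]
    [IsNoetherianRing A] [IsLocalRing A] [IsPrecomplete (maximalIdeal A) A] :
    IsAdicComplete ((maximalIdeal A).map (algebraMap A B)) B where
  toIsHausdorff := IsHausdorff.map_algebraMap_iff.mpr inferInstance
  toIsPrecomplete := IsPrecomplete.map_algebraMap_iff.mpr (isPrecomplete_of_finite _)

end Precomplete

section Integral

theorem ringKrullDim_eq_of_isIntegral (A R : Type*) [CommRing A] [CommRing R] [Algebra A R]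
    [Algebra.IsIntegral A R] [FaithfulSMul A R] : ringKrullDim A = ringKrullDim R := by
  apply le_antisymm
  · refine iSup_le fun l ↦ ?_
    obtain ⟨P, hP, hPl⟩ := (inferInstance : Nonempty (l.head.asIdeal.primesOver R))
    obtain ⟨L, hL, -⟩ := Ideal.exists_ltSeries_of_hasGoingUp l P
    rw [← hL]
    exact Order.LTSeries.length_le_krullDim L
  · exact Order.krullDim_le_of_strictMono (PrimeSpectrum.comap (algebraMap A R))
      fun p q hpq ↦ Ideal.IsIntegral.comap_lt_comap (R := A) (I := p.asIdeal) hpq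

variable {A R : Type*} [CommRing A] [CommRing R] [Algebra A R]

theorem maximalIdeal_le_radical_map_algebraMap [IsLocalRing A] [IsLocalRing R]
    [Algebra.IsIntegral A R] :
    maximalIdeal R ≤ ((maximalIdeal A).map (algebraMap A R)).radical := by
  rw [Ideal.radical_eq_sInf, le_sInf_iff]
  rintro P ⟨hP, hprime⟩
  have hcomap : P.comap (algebraMap A R) = maximalIdeal A :=
    ((maximalIdeal.isMaximal A).eq_of_le (Ideal.comap_ne_top _ hprime.ne_top)
      (Ideal.map_le_iff_le_comap.mp hP)).symm
  have hmax : P.IsMaximal := Ideal.isMaximal_of_isIntegral_of_isMaximal_comap (R := A) P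
    (hcomap ▸ maximalIdeal.isMaximal A)
  exact (eq_maximalIdeal hmax).ge

theorem exists_maximalIdeal_pow_le_map_algebraMap [IsLocalRing A] [IsLocalRing R]
    [IsNoetherianRing R] [Algebra.IsIntegral A R] :
    ∃ k, maximalIdeal R ^ k ≤ (maximalIdeal A).map (algebraMap A R) :=
  Ideal.exists_pow_le_of_le_radical_of_fg maximalIdeal_le_radical_map_algebraMap
    (IsNoetherian.noetherian _)

theorem isPrecomplete_maximalIdeal_of_map_one [IsLocalRing A] [IsLocalRing R]
    [IsNoetherianRing R] [Algebra.IsIntegral A R] [IsPrecomplete (maximalIdeal R) R]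
    {ρ : R →ₗ[A] A} (hρ : ρ 1 = 1) : IsPrecomplete (maximalIdeal A) A := by
  have := isLocalHom_algebraMap_of_map_one hρ
  have hle : (maximalIdeal A).map (algebraMap A R) ≤ maximalIdeal R :=
    ((local_hom_TFAE (algebraMap A R)).out 0 2).mp this
  obtain ⟨c, hc⟩ := exists_maximalIdeal_pow_le_map_algebraMap (A := A) (R := R)
  have : IsPrecomplete (maximalIdeal A) R :=
    IsPrecomplete.map_algebraMap_iff.mp (isPrecomplete_of_pow_le hle hc)
  exact isPrecomplete_of_surjective (maximalIdeal A) (f := ρ)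
    (Function.LeftInverse.surjective (apply_algebraMap_of_map_one hρ))

end Integral

section ExistsRegularPair

variable {A R M : Type*} [CommRing A] [CommRing R] [Algebra A R] [IsNoetherianRing A]
  [AddCommGroup M] [Module A M]

theorem exists_mem_isSMulRegular_of_forall_smul_eq_zero [Module.Finite A M] {I : Ideal A}
    (h : ∀ m : M, (∀ z ∈ I, z • m = 0) → m = 0) : ∃ x ∈ I, IsSMulRegular M x := by
  have hsub : Subsingleton ((A ⧸ I) →ₗ[A] M) := subsingleton_of_forall_eq 0 fun φ ↦ by
    refine Submodule.linearMap_qext _ (LinearMap.ext_ring (h _ fun z hz ↦ ?_))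
    rw [← map_smul, LinearMap.comp_apply, Submodule.mkQ_apply, smul_eq_mul, mul_one,
      (Submodule.Quotient.mk_eq_zero I).mpr hz, map_zero]
  simpa [Ideal.annihilator_quotient] using IsSMulRegular.subsingleton_linearMap_iff.mp hsub

theorem exists_isWeaklyRegular_pair_of_pow_le [Module R M] [IsScalarTower A R M]
    [Module.Finite A M] {I : Ideal A} {J : Ideal R} {k : ℕ}
    (hJ : J ^ k ≤ I.map (algebraMap A R)) {a b : R} (ha : a ∈ J) (hb : b ∈ J)
    (h : IsWeaklyRegular M [a, b]) : ∃ x ∈ I, ∃ y ∈ I, IsWeaklyRegular M [x, y] := by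
  have hspan {N : Submodule R M} {m : M} (hm : ∀ z ∈ I, z • m ∈ N) : ∀ w ∈ J ^ k, w • m ∈ N := by
    have hle : I.map (algebraMap A R) ≤ N.colon {m} := Ideal.map_le_iff_le_comap.mpr fun z hz ↦ by
      simpa [Submodule.mem_colon_singleton] using hm z hz
    exact fun w hw ↦ Submodule.mem_colon_singleton.mp (hle (hJ hw))
  obtain ⟨x, hxI, hx⟩ := exists_mem_isSMulRegular_of_forall_smul_eq_zero (M := M) (I := I)
    fun m hm ↦ (isWeaklyRegular_pair_iff.mp h).1.pow k <| by
      simpa using hspan (N := ⊥) (by simpa using hm) _ (Ideal.pow_mem_pow ha k)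
  have hxR : IsSMulRegular M (algebraMap A R x) := (isSMulRegular_algebraMap_iff R).mpr hx
  obtain ⟨y, hyI, hy⟩ := exists_mem_isSMulRegular_of_forall_smul_eq_zero (M := QuotSMulTop x M)
    (I := I) fun q hq ↦ by
      obtain ⟨m, rfl⟩ := Submodule.Quotient.mk_surjective _ q
      refine (Submodule.Quotient.mk_eq_zero _).mpr <| mem_smul_top_iff_exists_smul_eq.mpr ?_
      have hm := mem_smul_top_of_forall_mem_pow h ha hb hxR k <| hspan fun z hz ↦ by
        obtain ⟨m', hm'⟩ := mem_smul_top_iff_exists_smul_eq.mp <|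
          (Submodule.Quotient.mk_eq_zero _).mp (hq z hz)
        exact mem_smul_top_iff_exists_smul_eq.mpr ⟨m', by rw [algebraMap_smul, hm']⟩
      simpa using mem_smul_top_iff_exists_smul_eq.mp hm
  exact ⟨x, hxI, y, hyI, (isWeaklyRegular_cons_iff M x [y]).mpr
    ⟨hx, (isWeaklyRegular_singleton_iff _ y).mpr hy⟩⟩

end ExistsRegularPair

/-! ### The Reynolds operator -/

namespace fixedSubring

variable {G R : Type*} [Group G] [CommRing R] [MulSemiringAction G R]

theorem isUnit_of_isUnit_coe {x : fixedSubring G R} (hx : IsUnit (x : R)) : IsUnit x := by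
  obtain ⟨u, hu⟩ := hx.exists_right_inv
  have hfix (σ : G) : σ • u = u := hx.mul_left_cancel <| by
    have hσ := congrArg (σ • ·) hu
    simp only [smul_mul', x.2 σ, smul_one] at hσ
    rw [hσ, hu]
  exact IsUnit.of_mul_eq_one ⟨u, hfix⟩ (Subtype.ext hu)

variable [Fintype G]

variable (G R) in
/-- The trace `r ↦ ∑ σ, σ • r`, as a map of modules over the invariant ring. -/
def trace : R →ₗ[fixedSubring G R] fixedSubring G R where
  toFun r := ⟨∑ σ : G, σ • r, fun τ ↦ by
    simp only [Finset.smul_sum, ← mul_smul]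
    exact Fintype.sum_equiv (Equiv.mulLeft τ) _ _ fun _ ↦ rfl⟩
  map_add' r s := Subtype.ext <| by simp [Finset.sum_add_distrib]
  map_smul' c r := Subtype.ext <| by simp [Subring.smul_def, c.2 _, Finset.mul_sum]

theorem coe_trace (r : R) : (trace G R r : R) = ∑ σ : G, σ • r := rfl

variable (G R) in
/-- The Reynolds operator `r ↦ |G|⁻¹ ∑ σ, σ • r`, which retracts `R` onto the invariant ring.
It is the zero map when `|G|` is not invertible. -/
noncomputable def reynolds : R →ₗ[fixedSubring G R] fixedSubring G R :=
  Ring.inverse (Fintype.card G : fixedSubring G R) • trace G R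

theorem card_smul_reynolds (hG : IsUnit (Fintype.card G : R)) (r : R) :
    (Fintype.card G : fixedSubring G R) • reynolds G R r = trace G R r := by
  have hunit : IsUnit (Fintype.card G : fixedSubring G R) :=
    isUnit_of_isUnit_coe (by simpa using hG)
  rw [reynolds, LinearMap.smul_apply, smul_smul, Ring.mul_inverse_cancel _ hunit, one_smul]

theorem reynolds_one (hG : IsUnit (Fintype.card G : R)) : reynolds G R 1 = 1 := by
  have hunit : IsUnit (Fintype.card G : fixedSubring G R) :=
    isUnit_of_isUnit_coe (by simpa using hG)
  have htrace : trace G R 1 = Fintype.card G := Subtype.ext (by simp [coe_trace])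
  refine hunit.mul_left_cancel ?_
  rw [← smul_eq_mul, card_smul_reynolds hG, htrace, mul_one]

theorem eq_sum_reynolds_smul (hG : IsUnit (Fintype.card G : R)) {ι : Type*} {s : Finset ι}
    {c t : ι → R} {r : R} (h : ∀ σ : G, σ • r = ∑ i ∈ s, c i * σ • t i) :
    r = ∑ i ∈ s, reynolds G R (c i) • t i := by
  have hinv (σ : G) : r = ∑ i ∈ s, σ⁻¹ • c i * t i := by
    simpa [Finset.smul_sum, smul_mul'] using congrArg (σ⁻¹ • ·) (h σ)
  refine hG.mul_left_cancel ?_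
  calc (Fintype.card G : R) * r = ∑ σ : G, ∑ i ∈ s, σ⁻¹ • c i * t i := by simp [← hinv]
    _ = ∑ i ∈ s, trace G R (c i) • t i := by
      rw [Finset.sum_comm]
      refine Finset.sum_congr rfl fun i _ ↦ ?_
      rw [Subring.smul_def, coe_trace, smul_eq_mul, ← Finset.sum_mul]
      exact congrArg (· * t i) (Fintype.sum_equiv (Equiv.inv G) _ _ fun _ ↦ rfl)
    _ = (Fintype.card G : R) * ∑ i ∈ s, reynolds G R (c i) • t i := by
      simp [← card_smul_reynolds hG, Finset.mul_sum, Subring.smul_def, mul_assoc]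

theorem finite [IsNoetherianRing R] (hG : IsUnit (Fintype.card G : R)) :
    Module.Finite (fixedSubring G R) R := by
  classical
  let orbit : R → G → R := fun r σ ↦ σ • r
  obtain ⟨T, hT, hspan⟩ := (Submodule.fg_span_iff_fg_span_finset_subset (Set.range orbit)).mp
    (IsNoetherian.noetherian (Submodule.span R (Set.range orbit)))
  choose! t ht using fun (f : G → R) (hf : f ∈ T) ↦ hT hf
  refine ⟨⟨T.image t, Submodule.eq_top_iff'.mpr fun r ↦ ?_⟩⟩
  obtain ⟨c, -, hc⟩ := Submodule.mem_span_finset.mp <|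
    hspan ▸ Submodule.subset_span (Set.mem_range_self r)
  have hr (σ : G) : σ • r = ∑ f ∈ T, c f * σ • t f := by
    refine (congrFun hc σ).symm.trans ?_
    rw [Finset.sum_apply]
    exact Finset.sum_congr rfl fun f hf ↦ congrArg (c f * ·) (congrFun (ht f hf) σ).symm
  rw [eq_sum_reynolds_smul hG hr]
  exact Submodule.sum_mem _ fun f hf ↦ Submodule.smul_mem _ _ <|
    Submodule.subset_span (Finset.mem_image_of_mem t hf)

end fixedSubring

/-! ### Coextension of scalars -/

section Coextension

variable {A R M : Type*} [CommRing A] [CommRing R] [Algebra A R] [AddCommGroup M] [Module A M]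

variable (A R M) in
/-- The coextension of scalars of `M` from `A` to `R`: the `R`-module structure on `Hom_A(R, M)`
given by `(r • φ) s = φ (r * s)`. It is not an instance, since for `M = R` it would compete with
the pointwise structure. -/
abbrev coextensionModule : Module R (R →ₗ[A] M) where
  smul r φ := φ ∘ₗ LinearMap.mulLeft A r
  one_smul φ := LinearMap.ext fun s ↦ congrArg φ (one_mul s)
  mul_smul r t φ := LinearMap.ext fun s ↦ congrArg φ (by
    simp only [LinearMap.mulLeft_apply, mul_assoc, mul_left_comm])
  smul_zero _ := rfl
  zero_smul φ := LinearMap.ext fun s ↦ by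
    change φ (0 * s) = 0
    rw [zero_mul, map_zero]
  smul_add _ _ _ := rfl
  add_smul r t φ := LinearMap.ext fun s ↦ by
    change φ ((r + t) * s) = φ (r * s) + φ (t * s)
    rw [add_mul, map_add]

attribute [local instance] coextensionModule

theorem isScalarTower_coextensionModule : IsScalarTower A R (R →ₗ[A] M) where
  smul_assoc a r φ := LinearMap.ext fun s ↦ by
    change φ ((a • r) * s) = a • φ (r * s)
    rw [smul_mul_assoc, map_smul]

/-- A retraction `ρ` of `R` onto `A` embeds `M` into `Hom_A(R, M)` by `m ↦ (s ↦ ρ s • m)`;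
evaluation at `1` is a one-sided inverse when `ρ 1 = 1`. -/
def toCoextension (M : Type*) [AddCommGroup M] [Module A M] (ρ : R →ₗ[A] A) :
    M →ₗ[A] R →ₗ[A] M :=
  LinearMap.lcomp A M ρ ∘ₗ (LinearMap.lsmul A M).flip

theorem applyₗ_one_comp_toCoextension {ρ : R →ₗ[A] A} (hρ : ρ 1 = 1) :
    LinearMap.applyₗ (1 : R) ∘ₗ toCoextension M ρ = LinearMap.id :=
  LinearMap.ext fun m ↦ by simp [toCoextension, hρ]

theorem exists_comp_eq_id_pi_of_free {F : Type*} [Nontrivial R] [AddCommGroup F] [Module A F]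
    [Module R F] [IsScalarTower A R F] [Module.Free R F] [Module.Finite R F] {i : M →ₗ[A] F}
    {q : F →ₗ[A] M} (h : q ∘ₗ i = LinearMap.id) :
    ∃ (n : ℕ) (f : M →ₗ[A] Fin n → R) (g : (Fin n → R) →ₗ[A] M), g ∘ₗ f = LinearMap.id := by
  let e : F ≃ₗ[A] Fin (Module.finrank R F) → R :=
    (Module.finBasis R F).equivFun.restrictScalars A
  refine ⟨_, e.toLinearMap ∘ₗ i, q ∘ₗ e.symm.toLinearMap, LinearMap.ext fun m ↦ ?_⟩
  simpa using LinearMap.congr_fun h m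

/-- The module `Hom_A(R, M)` is maximal Cohen–Macaulay over the regular ring `R`, hence free. -/
theorem IsRegularParameters.exists_comp_eq_id_pi [IsNoetherianRing A] [IsNoetherianRing R]
    [IsLocalRing R] [Module.Finite A R] [Module.Finite A M] {a b : R} {x y : A}
    (h : IsRegularParameters [a, b]) {ρ : R →ₗ[A] A} (hρ : ρ 1 = 1)
    (hx : algebraMap A R x ∈ maximalIdeal R) (hy : algebraMap A R y ∈ maximalIdeal R)
    (hM : IsWeaklyRegular M [x, y]) :
    ∃ (n : ℕ) (f : M →ₗ[A] Fin n → R) (g : (Fin n → R) →ₗ[A] M), g ∘ₗ f = LinearMap.id := by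
  have := isScalarTower_coextensionModule (A := A) (R := R) (M := M)
  have : Module.Finite R (R →ₗ[A] M) := Module.Finite.of_restrictScalars_finite A R _
  have hreg : IsWeaklyRegular (R →ₗ[A] M) [algebraMap A R x, algebraMap A R y] :=
    (isWeaklyRegular_map_algebraMap_iff R _ [x, y]).mpr (isWeaklyRegular_pair_linearMap hM)
  have : Module.Free R (R →ₗ[A] M) := h.free_of_isWeaklyRegular hx hy hreg
  exact exists_comp_eq_id_pi_of_free (applyₗ_one_comp_toCoextension hρ)

end Coextension

/-! ### Krull–Schmidt over complete local rings -/

section Idempotents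

theorem exists_isIdempotentElem_mk_eq {B : Type*} [CommRing B] {J : Ideal B} [HenselianRing B J]
    {e : B ⧸ J} (he : IsIdempotentElem e) :
    ∃ e' : B, IsIdempotentElem e' ∧ Ideal.Quotient.mk J e' = e := by
  obtain ⟨t, rfl⟩ := Ideal.Quotient.mk_surjective e
  have hunit : IsUnit (2 * Ideal.Quotient.mk J t - 1) :=
    IsUnit.of_mul_eq_one (2 * Ideal.Quotient.mk J t - 1) (by linear_combination 4 * he.eq)
  obtain ⟨e', hroot, hmem⟩ := HenselianRing.is_henselian (I := J)
    (Polynomial.X ^ 2 - Polynomial.X) (by monicity!) t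
    (Ideal.Quotient.eq_zero_iff_mem.mp (by simp [sq, he.eq]))
    (by simpa [one_add_one_eq_two, map_ofNat (Ideal.Quotient.mk J) 2] using hunit)
  refine ⟨e', ?_, Ideal.Quotient.eq.mpr hmem⟩
  have : e' ^ 2 - e' = 0 := by simpa using hroot
  exact (sq e').symm.trans (sub_eq_zero.mp this)

theorem isLocalRing_of_forall_isIdempotentElem_of_isArtinianRing {B : Type*} [CommRing B]
    [IsArtinianRing B] [Nontrivial B] (h : ∀ e : B, IsIdempotentElem e → e = 0 ∨ e = 1) :
    IsLocalRing B := by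
  refine .of_isUnit_or_isUnit_one_sub_self fun t ↦ ?_
  obtain ⟨n, y, hy⟩ := IsArtinian.exists_pow_succ_smul_dvd t (1 : B)
  replace hy : t ^ n = t ^ n * (t * y) := by
    simpa [pow_succ, mul_assoc] using hy.symm
  have hpow (k : ℕ) : t ^ n = t ^ n * (t * y) ^ k := by
    induction k with
    | zero => simp
    | succ k ih => rw [pow_succ, ← mul_assoc, ← ih, ← hy]
  have hidem : IsIdempotentElem ((t * y) ^ n) := calc
    (t * y) ^ n * (t * y) ^ n = t ^ n * (t * y) ^ n * y ^ n := by ring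
    _ = (t * y) ^ n := by rw [← hpow n, mul_pow]
  obtain hzero | hone := h _ hidem
  · right
    exact IsNilpotent.isUnit_one_sub ⟨n, by rw [hpow n, hzero, mul_zero]⟩
  · left
    have hunit : IsUnit (t ^ n) := IsUnit.of_mul_eq_one (y ^ n) (by rw [← mul_pow, hone])
    exact IsUnit.of_mul_eq_one y (hunit.mul_left_cancel (by rw [← hy, mul_one]))

theorem isLocalRing_of_forall_isIdempotentElem (A : Type*) {B : Type*} [CommRing A]
    [IsNoetherianRing A] [IsLocalRing A] [IsPrecomplete (maximalIdeal A) A] [CommRing B]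
    [Algebra A B] [Module.Finite A B] [Nontrivial B]
    (h : ∀ e : B, IsIdempotentElem e → e = 0 ∨ e = 1) : IsLocalRing B := by
  let J := (maximalIdeal A).map (algebraMap A B)
  have : IsAdicComplete J B := isAdicComplete_map_algebraMap
  have hjac : J ≤ (⊥ : Ideal B).jacobson := HenselianRing.jac
  have : Nontrivial (B ⧸ J) := Ideal.Quotient.nontrivial_iff.mpr fun htop ↦
    bot_ne_top (Ideal.jacobson_eq_top_iff.mp (top_le_iff.mp (htop ▸ hjac)))
  have : IsArtinianRing (B ⧸ J) := by
    let := Ideal.Quotient.field (maximalIdeal A)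
    have : Module.Finite (A ⧸ maximalIdeal A) (B ⧸ J) :=
      Module.Finite.of_restrictScalars_finite A _ _
    exact IsArtinianRing.of_finite (A ⧸ maximalIdeal A) (B ⧸ J)
  have : IsLocalRing (B ⧸ J) := by
    refine isLocalRing_of_forall_isIdempotentElem_of_isArtinianRing fun e he ↦ ?_
    obtain ⟨e', he', rfl⟩ := exists_isIdempotentElem_mk_eq he
    exact (h e' he').imp (fun h0 ↦ by rw [h0, map_zero]) (fun h1 ↦ by rw [h1, map_one])
  have := isLocalHom_of_le_jacobson_bot J hjac
  exact RingHom.domain_isLocalRing (Ideal.Quotient.mk J)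

open scoped IsMulCommutative in
theorem isLocalRing_end_of_isIndecomposableModule {A M : Type*} [CommRing A] [IsNoetherianRing A]
    [IsLocalRing A] [IsPrecomplete (maximalIdeal A) A] [AddCommGroup M] [Module A M]
    [Module.Finite A M] (hM : IsIndecomposableModule A M) : IsLocalRing (Module.End A M) := by
  have := hM.1
  refine .of_isUnit_or_isUnit_one_sub_self fun f ↦ ?_
  let B := Algebra.adjoin A {f}
  have : Module.Finite A B := inferInstanceAs (Module.Finite A (Subalgebra.toSubmodule B))
  have hidem (e : B) (he : IsIdempotentElem e) : e = 0 ∨ e = 1 := by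
    have he' : IsIdempotentElem (e : Module.End A M) := congrArg Subtype.val he
    refine (hM.2 _ _ (LinearMap.IsIdempotentElem.isCompl he')).imp (fun hrange ↦ ?_) fun hker ↦ ?_
    · exact Subtype.ext (LinearMap.range_eq_bot.mp hrange)
    · refine Subtype.ext (LinearMap.ext fun m ↦ LinearMap.ker_eq_bot.mp hker ?_)
      exact LinearMap.congr_fun he' m
  have := isLocalRing_of_forall_isIdempotentElem A hidem
  let t : B := ⟨f, Algebra.self_mem_adjoin_singleton A f⟩
  exact (IsLocalRing.isUnit_or_isUnit_one_sub_self t).imp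
    (IsUnit.map B.val) (IsUnit.map B.val)

end Idempotents

section Retracts

variable {A M N : Type*} [CommRing A] [AddCommGroup M] [Module A M] [AddCommGroup N] [Module A N]

theorem isCompl_range_ker_of_comp_eq_id {f : M →ₗ[A] N} {g : N →ₗ[A] M}
    (h : g ∘ₗ f = LinearMap.id) : IsCompl (LinearMap.range f) (LinearMap.ker g) := by
  have hgf (m : M) : g (f m) = m := LinearMap.congr_fun h m
  have hidem : IsIdempotentElem (f ∘ₗ g : Module.End A N) :=
    LinearMap.ext fun n ↦ congrArg f (hgf (g n))
  have hsurj : LinearMap.range g = ⊤ := LinearMap.range_eq_top.mpr fun m ↦ ⟨f m, hgf m⟩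
  have hinj : LinearMap.ker f = ⊥ := LinearMap.ker_eq_bot.mpr (Function.LeftInverse.injective hgf)
  have := LinearMap.IsIdempotentElem.isCompl hidem
  rwa [LinearMap.range_comp_of_range_eq_top f hsurj, LinearMap.ker_comp_of_ker_eq_bot g hinj]
    at this

theorem exists_isCompl_linearEquiv_of_comp_eq_id {f : M →ₗ[A] N} {g : N →ₗ[A] M}
    (h : g ∘ₗ f = LinearMap.id) :
    ∃ N₁ N₂ : Submodule A N, IsCompl N₁ N₂ ∧ Nonempty (M ≃ₗ[A] N₁) :=
  ⟨_, _, isCompl_range_ker_of_comp_eq_id h,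
    ⟨LinearEquiv.ofInjective f (LinearMap.injective_of_comp_eq_id f g h)⟩⟩

theorem nonempty_linearEquiv_of_comp_eq_id [Nontrivial M] (hN : IsIndecomposableModule A N)
    {f : M →ₗ[A] N} {g : N →ₗ[A] M} (h : g ∘ₗ f = LinearMap.id) : Nonempty (M ≃ₗ[A] N) := by
  have hcompl := isCompl_range_ker_of_comp_eq_id h
  have hinj := LinearMap.injective_of_comp_eq_id f g h
  have hrange : LinearMap.range f ≠ ⊥ := fun hbot ↦ by
    obtain ⟨m, hm⟩ := exists_ne (0 : M)
    exact hm (hinj (by rw [LinearMap.range_eq_bot.mp hbot, LinearMap.zero_apply, map_zero]))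
  have hker := (hN.2 _ _ hcompl).resolve_left hrange
  have hsurj : LinearMap.range f = ⊤ := by simpa [hker] using hcompl.sup_eq_top
  exact ⟨LinearEquiv.ofBijective f ⟨hinj, LinearMap.range_eq_top.mp hsurj⟩⟩

theorem exists_comp_eq_id_of_comp_eq_id_pi [IsLocalRing (Module.End A M)] {ι : Type*} [Finite ι]
    {N : ι → Type*} [∀ i, AddCommGroup (N i)] [∀ i, Module A (N i)] {f : M →ₗ[A] ∀ i, N i}
    {g : (∀ i, N i) →ₗ[A] M} (h : g ∘ₗ f = LinearMap.id) :
    ∃ (i : ι) (p : M →ₗ[A] N i) (q : N i →ₗ[A] M), q ∘ₗ p = LinearMap.id := by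
  classical
  have := Fintype.ofFinite ι
  let p (i : ι) : M →ₗ[A] N i := LinearMap.proj i ∘ₗ f
  let q (i : ι) : N i →ₗ[A] M := g ∘ₗ LinearMap.single A N i
  have hsum : ∑ i, (q i ∘ₗ p i : Module.End A M) = 1 := LinearMap.ext fun m ↦ by
    simpa [p, q, LinearMap.sum_apply, ← map_sum, Finset.univ_sum_single]
      using LinearMap.congr_fun h m
  obtain ⟨i, -, hi⟩ := IsLocalRing.exists_of_isUnit_sum (hsum ▸ isUnit_one)
  obtain ⟨u, hu⟩ := hi.exists_left_inv
  exact ⟨i, p i, u ∘ₗ q i, hu⟩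

end Retracts

theorem isComplemented_induction {α : Type*} [Lattice α] [BoundedOrder α] [IsModularLattice α]
    [WellFoundedGT α] {P : α → Prop} (bot : P ⊥)
    (sup : ∀ x y, Disjoint x y → P x → P y → P (x ⊔ y))
    (indecomposable : ∀ x, x ≠ ⊥ →
      (∀ y z, Disjoint y z → y ⊔ z = x → y = ⊥ ∨ z = ⊥) → P x)
    {x : α} (hx : IsComplemented x) : P x := by
  obtain ⟨c, hc⟩ := hx
  induction c using WellFoundedGT.induction generalizing x with
  | ind c ih =>
  by_cases hbot : x = ⊥
  · exact hbot ▸ bot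
  by_cases hind : ∀ y z, Disjoint y z → y ⊔ z = x → y = ⊥ ∨ z = ⊥
  · exact indecomposable x hbot hind
  push Not at hind
  obtain ⟨y, z, hyz, rfl, hy, hz⟩ := hind
  have key {y z : α} (hyz : Disjoint y z) (hz : z ≠ ⊥) (hc : IsCompl (y ⊔ z) c) : P y := by
    refine ih (z ⊔ c) (right_lt_sup.mpr fun hzc ↦ hz ?_) ⟨?_, ?_⟩
    · exact disjoint_self.mp (hc.disjoint.mono le_sup_right hzc)
    · exact hyz.disjoint_sup_right_of_disjoint_sup_left hc.disjoint
    · exact codisjoint_assoc.mp hc.codisjoint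
  exact sup y z hyz (key hyz hz hc) (key hyz.symm hy (sup_comm y z ▸ hc))

section KrullSchmidt

variable {A N : Type*} [CommRing A] [AddCommGroup N] [Module A N]

theorem isIndecomposableModule_coe {X : Submodule A N} (hX : X ≠ ⊥)
    (h : ∀ Y Z : Submodule A N, Disjoint Y Z → Y ⊔ Z = X → Y = ⊥ ∨ Z = ⊥) :
    IsIndecomposableModule A X := by
  refine ⟨Submodule.nontrivial_iff_ne_bot.mpr hX, fun Y Z hYZ ↦ ?_⟩
  obtain ⟨hdisj, hsup⟩ := Set.Iic.isCompl_iff.mp (X.mapIic.isCompl_iff.mp hYZ)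
  have hbot {W : Submodule A X} (hW : W.map X.subtype = ⊥) : W = ⊥ :=
    Submodule.map_injective_of_injective X.injective_subtype (hW.trans (Submodule.map_bot _).symm)
  exact (h _ _ hdisj hsup).imp hbot hbot

variable (A N) in
theorem exists_finset_supIndep_isIndecomposableModule [IsNoetherian A N] :
    ∃ s : Finset (Submodule A N), s.SupIndep id ∧ s.sup id = ⊤ ∧
      ∀ L ∈ s, IsIndecomposableModule A L := by
  classical
  refine isComplemented_induction (P := fun X : Submodule A N ↦ ∃ s : Finset (Submodule A N),
    s.SupIndep id ∧ s.sup id = X ∧ ∀ L ∈ s, IsIndecomposableModule A L) ?_ ?_ ?_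
    isComplemented_top
  · exact ⟨∅, Finset.supIndep_empty _, Finset.sup_empty, by simp⟩
  · rintro _ _ hdisj ⟨s, hs, rfl, hs'⟩ ⟨t, ht, rfl, ht'⟩
    exact ⟨s ∪ t, hs.union ht hdisj, Finset.sup_union, fun L hL ↦
      (Finset.mem_union.mp hL).elim (hs' L) (ht' L)⟩
  · intro X hX h
    exact ⟨{X}, Finset.supIndep_singleton _ _, by simp, by
      simpa using isIndecomposableModule_coe hX h⟩

theorem nonempty_linearEquiv_pi_of_supIndep {s : Finset (Submodule A N)} (hs : s.SupIndep id)
    (hsup : s.sup id = ⊤) : Nonempty (N ≃ₗ[A] ∀ L : s, (L : Submodule A N)) := by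
  classical
  have hint : DirectSum.IsInternal fun L : s ↦ (L : Submodule A N) := by
    refine (DirectSum.isInternal_submodule_iff_iSupIndep_and_iSup_eq_top _).mpr ⟨?_, ?_⟩
    · exact iSupIndep_comp_coe_iff_supIndep.mpr hs
    · rw [← hsup, Finset.sup_eq_iSup, iSup_subtype']; rfl
  exact ⟨(LinearEquiv.ofBijective (DirectSum.coeLinearMap _) hint).symm ≪≫ₗ
    DirectSum.linearEquivFunOnFintype A s _⟩

variable (A N) in
theorem exists_fin_linearEquiv_of_retract [IsNoetherianRing A] [IsLocalRing A]
    [IsPrecomplete (maximalIdeal A) A] [Module.Finite A N] :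
    ∃ (n : ℕ) (L : Fin n → Submodule A N), ∀ (M : Type u) [AddCommGroup M] [Module A M]
      [Module.Finite A M], IsIndecomposableModule A M → ∀ (f : M →ₗ[A] N) (g : N →ₗ[A] M),
        g ∘ₗ f = LinearMap.id → ∃ i, Nonempty (M ≃ₗ[A] L i) := by
  obtain ⟨s, hs, hsup, hind⟩ := exists_finset_supIndep_isIndecomposableModule A N
  obtain ⟨e⟩ := nonempty_linearEquiv_pi_of_supIndep hs hsup
  refine ⟨s.card, fun i ↦ s.equivFin.symm i, fun M _ _ _ hM f g h ↦ ?_⟩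
  have := hM.1
  have := isLocalRing_end_of_isIndecomposableModule hM
  have hpi : (g ∘ₗ e.symm.toLinearMap) ∘ₗ (e.toLinearMap ∘ₗ f) = LinearMap.id :=
    LinearMap.ext fun m ↦ by simpa using LinearMap.congr_fun h m
  obtain ⟨L, p, q, hqp⟩ := exists_comp_eq_id_of_comp_eq_id_pi hpi
  obtain ⟨i, rfl⟩ := s.equivFin.symm.surjective L
  exact ⟨i, nonempty_linearEquiv_of_comp_eq_id (hind _ (Subtype.property _)) hqp⟩

end KrullSchmidt

section SplitFinite

variable {A : Type u} {R : Type v} [CommRing A] [CommRing R]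

theorem isRegularParameters_pair_iff [IsLocalRing R] {a b : R} :
    IsRegularParameters [a, b] ↔ maximalIdeal R = Ideal.span {a, b} ∧ ringKrullDim R = 2 := by
  have hspan : Ideal.ofList [a, b] = Ideal.span {a, b} := by
    rw [Ideal.ofList_cons, Ideal.ofList_singleton, ← Ideal.span_insert]
  exact ⟨fun h ↦ ⟨h.ofList_eq.symm.trans hspan, h.ringKrullDim_eq⟩,
    fun h ↦ ⟨hspan.trans h.1.symm, h.2⟩⟩

theorem isMCM₂_iff_exists_isWeaklyRegular [IsLocalRing A] {M : Type w} [AddCommGroup M]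
    [Module A M] [Nontrivial M] [Module.Finite A M] :
    IsMCM₂ A M ↔ ∃ x ∈ maximalIdeal A, ∃ y ∈ maximalIdeal A, IsWeaklyRegular M [x, y] := by
  constructor
  · rintro ⟨-, x, y, hx, hy, hxy⟩
    exact ⟨x, hx, y, hy, hxy.toIsWeaklyRegular⟩
  · rintro ⟨x, hx, y, hy, hxy⟩
    exact ⟨inferInstance, x, y, hx, hy,
      (isRegular_iff_isWeaklyRegular_of_subset_maximalIdeal (by simp_all)).mpr hxy⟩

variable [IsLocalRing R] [IsNoetherianRing R] [Algebra A R] [Module.Finite A R] {a b : R}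

namespace IsRegularParameters

theorem isMCM₂ [IsLocalRing A] [IsNoetherianRing A] (h : IsRegularParameters [a, b]) :
    IsMCM₂ A R := by
  obtain ⟨k, hk⟩ := exists_maximalIdeal_pow_le_map_algebraMap (A := A) (R := R)
  exact isMCM₂_iff_exists_isWeaklyRegular.mpr <| exists_isWeaklyRegular_pair_of_pow_le hk
    (h.mem_maximalIdeal (by simp)) (h.mem_maximalIdeal (by simp)) h.isWeaklyRegular

variable {ρ : R →ₗ[A] A}

theorem isMCM₂_self [IsLocalRing A] [IsNoetherianRing A] (h : IsRegularParameters [a, b])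
    (hρ : ρ 1 = 1) : IsMCM₂ A A := by
  obtain ⟨x, hx, y, hy, hxy⟩ := isMCM₂_iff_exists_isWeaklyRegular.mp (h.isMCM₂ (A := A))
  exact isMCM₂_iff_exists_isWeaklyRegular.mpr ⟨x, hx, y, hy,
    isWeaklyRegular_pair_of_comp_eq_id (comp_algebra_linearMap_of_map_one hρ) hxy⟩

theorem exists_comp_eq_id_of_isIndecomposableModule [IsLocalRing A]
    [IsPrecomplete (maximalIdeal R) R] (h : IsRegularParameters [a, b]) (hρ : ρ 1 = 1)
    {M : Type w} [AddCommGroup M] [Module A M] (hM : IsMCM₂ A M)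
    (hM' : IsIndecomposableModule A M) :
    ∃ (f : M →ₗ[A] R) (g : R →ₗ[A] M), g ∘ₗ f = LinearMap.id := by
  have := isNoetherianRing_of_map_one hρ
  have := isLocalHom_algebraMap_of_map_one hρ
  have := isPrecomplete_maximalIdeal_of_map_one hρ
  obtain ⟨_, x, y, hx, hy, hxy⟩ := hM
  have hmem {z : A} (hz : ¬ IsUnit z) : algebraMap A R z ∈ maximalIdeal R :=
    map_mem_nonunits_iff (algebraMap A R) z |>.mpr hz
  obtain ⟨n, f, g, hgf⟩ := h.exists_comp_eq_id_pi hρ (hmem hx) (hmem hy) hxy.toIsWeaklyRegular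
  have := isLocalRing_end_of_isIndecomposableModule hM'
  obtain ⟨-, p, q, hqp⟩ := exists_comp_eq_id_of_comp_eq_id_pi hgf
  exact ⟨p, q, hqp⟩

end IsRegularParameters

end SplitFinite

theorem invariants_of_two_dim_regular_finite_CM_type_general
    {A : Type u} {R : Type v} [CommRing A] [CommRing R] [IsNoetherianRing R] [IsLocalRing R]
    [IsPrecomplete (maximalIdeal R) R] [Algebra A R] [Module.Finite A R]
    (hdim : ringKrullDim R = 2) (hreg : ∃ a b : R, maximalIdeal R = Ideal.span {a, b})
    {ρ : R →ₗ[A] A} (hρ : ρ 1 = 1) :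
    IsDomain A ∧ IsIntegrallyClosed A ∧ IsLocalRing A ∧ ringKrullDim A = 2 ∧
    IsMCM₂ A A ∧ IsMCM₂ A R ∧
    (∀ (M : Type w) [AddCommGroup M] [Module A M], IsMCM₂ A M → IsIndecomposableModule A M →
      ∃ N N' : Submodule A R, IsCompl N N' ∧ Nonempty (M ≃ₗ[A] N)) ∧
    (∃ (n : ℕ) (L : Fin n → Submodule A R), ∀ (M : Type w) [AddCommGroup M] [Module A M],
      IsMCM₂ A M → IsIndecomposableModule A M → ∃ i : Fin n, Nonempty (M ≃ₗ[A] L i)) := by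
  obtain ⟨a, b, hab⟩ := hreg
  have h := isRegularParameters_pair_iff.mpr ⟨hab, hdim⟩
  have : IsDomain R := h.isDomain
  have : UniqueFactorizationMonoid R := h.uniqueFactorizationMonoid
  have hinj := algebraMap_injective_of_map_one hρ
  have : FaithfulSMul A R := (faithfulSMul_iff_algebraMap_injective A R).mpr hinj
  have hA : IsDomain A := hinj.isDomain (algebraMap A R)
  have := isNoetherianRing_of_map_one hρ
  have := isLocalHom_algebraMap_of_map_one hρ
  have hlocal : IsLocalRing A := RingHom.domain_isLocalRing (algebraMap A R)
  have := isPrecomplete_maximalIdeal_of_map_one hρ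
  obtain ⟨n, L, hL⟩ := exists_fin_linearEquiv_of_retract A R
  refine ⟨hA, isIntegrallyClosed_of_map_one hρ, hlocal,
    (ringKrullDim_eq_of_isIntegral A R).trans hdim, h.isMCM₂_self hρ, h.isMCM₂,
    fun M _ _ hM hM' ↦ ?_, n, L, fun M _ _ hM hM' ↦ ?_⟩
  · obtain ⟨f, g, hgf⟩ := h.exists_comp_eq_id_of_isIndecomposableModule hρ hM hM'
    exact exists_isCompl_linearEquiv_of_comp_eq_id hgf
  · obtain ⟨f, g, hgf⟩ := h.exists_comp_eq_id_of_isIndecomposableModule hρ hM hM'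
    have := hM.1
    exact hL M hM' f g hgf

/-- Herzog's theorem: if `(R,𝔪)` is a two-dimensional complete regular local ring
(`dim R = 2` and `𝔪` is generated by two elements) with a finite group `G` acting by
ring automorphisms, `|G|` a unit in `R`, then `R^G` is a normal Cohen–Macaulay local
domain of dimension two, `R` is a maximal Cohen–Macaulay `R^G`-module, every
indecomposable maximal Cohen–Macaulay `R^G`-module is a direct summand of `R`, and
`R^G` has finite Cohen–Macaulay type. -/
theorem invariants_of_two_dim_regular_finite_CM_type
    (R : Type) [CommRing R] [IsNoetherianRing R] [IsLocalRing R]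
    [IsAdicComplete (IsLocalRing.maximalIdeal R) R]
    (hdim : ringKrullDim R = 2)
    (hreg : ∃ a b : R, IsLocalRing.maximalIdeal R = Ideal.span {a, b})
    (G : Type) [Group G] [Fintype G] [MulSemiringAction G R]
    (hG : IsUnit ((Fintype.card G : R))) :
    IsDomain (fixedSubring G R) ∧
    IsIntegrallyClosed (fixedSubring G R) ∧
    IsLocalRing (fixedSubring G R) ∧
    ringKrullDim (fixedSubring G R) = 2 ∧
    IsMCM₂ (fixedSubring G R) (fixedSubring G R) ∧
    IsMCM₂ (fixedSubring G R) R ∧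
    (∀ (M : Type) [AddCommGroup M] [Module (fixedSubring G R) M],
      IsMCM₂ (fixedSubring G R) M → IsIndecomposableModule (fixedSubring G R) M →
        ∃ N N' : Submodule (fixedSubring G R) R,
          IsCompl N N' ∧ Nonempty (M ≃ₗ[fixedSubring G R] N)) ∧
    (∃ (n : ℕ) (L : Fin n → Submodule (fixedSubring G R) R),
      ∀ (M : Type) [AddCommGroup M] [Module (fixedSubring G R) M],
        IsMCM₂ (fixedSubring G R) M → IsIndecomposableModule (fixedSubring G R) M →
          ∃ i : Fin n, Nonempty (M ≃ₗ[fixedSubring G R] L i)) := by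
  have := fixedSubring.finite hG
  exact invariants_of_two_dim_regular_finite_CM_type_general hdim hreg
    (fixedSubring.reynolds_one hG)
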